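/- Let V, W be finite-dimensional complex vector spaces with dim V = c, and for each p = [p₁:p₂] ∈ ℙ¹ let B̃₁(p) = p₁B₁₁ + p₂B₂₁, B̃₂(p) = p₁B₁₂ + p₂B₂₂, ĩ(p) = p₁i₁ + p₂i₂ be the evaluated complex ADHM datum. If there exists some p ∈ ℙ¹ such that (B̃₁(p), B̃₂(p), ĩ(p)) is stable, then the set of points q ∈ ℙ¹ at which (B̃₁(q), B̃₂(q), ĩ(q)) is not stable is finite. -/

import Mathlib

variable {V W : Type*} [AddCommGroup V] [Module ℂ V] [AddCommGroup W] [Module ℂ W]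
  [FiniteDimensional ℂ V] [FiniteDimensional ℂ W]

def ADHMStable (B₁ B₂ : V →ₗ[ℂ] V) (i : W →ₗ[ℂ] V) : Prop :=
  ∀ S : Submodule ℂ V, S ≠ ⊤ → (∀ v ∈ S, B₁ v ∈ S) → (∀ v ∈ S, B₂ v ∈ S) →
    ¬ LinearMap.range i ≤ S

/-- Functions `ℂ → ℂ` given by evaluating a polynomial. -/
noncomputable def polynomialFunSubring : Subring (ℂ → ℂ) :=
  (RingHom.pi fun t : ℂ => Polynomial.evalRingHom t).range

lemma mem_polynomialFunSubring {f : ℂ → ℂ} :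
    f ∈ polynomialFunSubring ↔ ∃ P : Polynomial ℂ, ∀ t, P.eval t = f t := by
  simp only [polynomialFunSubring, RingHom.mem_range, funext_iff]
  rfl

lemma affine_mem_polynomialFunSubring (a b : ℂ) :
    (fun t => a + t * b) ∈ polynomialFunSubring :=
  mem_polynomialFunSubring.2 ⟨Polynomial.C a + Polynomial.C b * Polynomial.X, fun t => by
    simp [mul_comm b t]⟩

lemma finite_zeros_of_mem_polynomialFunSubring {f : ℂ → ℂ} (hf : f ∈ polynomialFunSubring)
    {t₀ : ℂ} (h₀ : f t₀ ≠ 0) : {t | f t = 0}.Finite := by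
  obtain ⟨P, hP⟩ := mem_polynomialFunSubring.1 hf
  have hP0 : P ≠ 0 := by
    rintro rfl
    exact h₀ (by simp [← hP])
  refine (Polynomial.finite_setOfPred_isRoot hP0).subset fun t ht => ?_
  simpa [Polynomial.IsRoot, hP] using ht

section WordVectors

variable {V W : Type*} [AddCommGroup V] [Module ℂ V] [AddCommGroup W] [Module ℂ W]

/-- The vector obtained by applying a word in `B₁` (letter `true`) and `B₂` (letter `false`)
to `i w`. -/
def wordVector (B₁ B₂ : V →ₗ[ℂ] V) (i : W →ₗ[ℂ] V) (x : List Bool × W) : V :=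
  x.1.foldr (fun a v => if a then B₁ v else B₂ v) (i x.2)

lemma adhmStable_iff_span_wordVector (B₁ B₂ : V →ₗ[ℂ] V) (i : W →ₗ[ℂ] V) :
    ADHMStable B₁ B₂ i ↔ Submodule.span ℂ (Set.range (wordVector B₁ B₂ i)) = ⊤ := by
  constructor
  · intro h
    by_contra hS
    refine h _ hS (fun v hv => ?_) (fun v hv => ?_) ?_
    · refine Submodule.span_le (p := (Submodule.span ℂ _).comap B₁) |>.2 ?_ hv
      rintro _ ⟨⟨l, w⟩, rfl⟩
      exact Submodule.subset_span ⟨(true :: l, w), by simp [wordVector]⟩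
    · refine Submodule.span_le (p := (Submodule.span ℂ _).comap B₂) |>.2 ?_ hv
      rintro _ ⟨⟨l, w⟩, rfl⟩
      exact Submodule.subset_span ⟨(false :: l, w), by simp [wordVector]⟩
    · rintro _ ⟨w, rfl⟩
      exact Submodule.subset_span ⟨([], w), by simp [wordVector]⟩
  · intro h S hS h₁ h₂ hi
    refine hS (top_le_iff.1 (h ▸ Submodule.span_le.2 ?_))
    rintro _ ⟨⟨l, w⟩, rfl⟩
    induction l with
    | nil => exact hi ⟨w, rfl⟩
    | cons a l ih =>
      cases a
      · exact h₂ _ ih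
      · exact h₁ _ ih

lemma ADHMStable.smul {B₁ B₂ : V →ₗ[ℂ] V} {i : W →ₗ[ℂ] V} (h : ADHMStable B₁ B₂ i)
    {s : ℂ} (hs : s ≠ 0) : ADHMStable (s • B₁) (s • B₂) (s • i) := by
  intro S hS h₁ h₂ hi
  refine h S hS (fun v hv => (S.smul_mem_iff hs).1 (h₁ v hv))
    (fun v hv => (S.smul_mem_iff hs).1 (h₂ v hv)) ?_
  rintro _ ⟨w, rfl⟩
  exact (S.smul_mem_iff hs).1 (hi ⟨w, rfl⟩)

variable {κ : Type*} [Fintype κ]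

lemma repr_affine_apply_mem_polynomialFunSubring (b : Module.Basis κ ℂ V)
    (A A' : V →ₗ[ℂ] V) {f : ℂ → V} (hf : ∀ k, (fun t => b.repr (f t) k) ∈ polynomialFunSubring)
    (k : κ) : (fun t => b.repr ((A + t • A') (f t)) k) ∈ polynomialFunSubring := by
  have key : (fun t => b.repr ((A + t • A') (f t)) k) =
      ∑ m, (fun t => b.repr (A (b m)) k + t * b.repr (A' (b m)) k) *
        (fun t => b.repr (f t) m) := by
    funext t
    conv_lhs => rw [← b.sum_repr (f t)]
    simp only [map_sum, map_smul, LinearMap.add_apply, LinearMap.smul_apply, map_add,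
      Finsupp.coe_finsetSum, Finset.sum_apply, Finsupp.add_apply, Finsupp.smul_apply,
      smul_eq_mul, Pi.mul_apply]
    exact Finset.sum_congr rfl fun m _ => by ring
  rw [key]
  exact sum_mem fun m _ => mul_mem (affine_mem_polynomialFunSubring _ _) (hf m)

lemma repr_wordVector_mem_polynomialFunSubring (b : Module.Basis κ ℂ V)
    (A₁ A₁' A₂ A₂' : V →ₗ[ℂ] V) (i i' : W →ₗ[ℂ] V) (x : List Bool × W) (k : κ) :
    (fun t : ℂ => b.repr (wordVector (A₁ + t • A₁') (A₂ + t • A₂') (i + t • i') x) k) ∈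
      polynomialFunSubring := by
  obtain ⟨l, w⟩ := x
  induction l generalizing k with
  | nil => simpa [wordVector] using affine_mem_polynomialFunSubring _ _
  | cons a l ih =>
    cases a
    · exact repr_affine_apply_mem_polynomialFunSubring b A₂ A₂' ih k
    · exact repr_affine_apply_mem_polynomialFunSubring b A₁ A₁' ih k

/-- On an affine line of data, stability at one point implies stability at all but finitely
many points. -/
lemma finite_setOf_not_adhmStable_affine [FiniteDimensional ℂ V]
    (A₁ A₁' A₂ A₂' : V →ₗ[ℂ] V) (i i' : W →ₗ[ℂ] V) (h : ADHMStable A₁ A₂ i) :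
    {t : ℂ | ¬ ADHMStable (A₁ + t • A₁') (A₂ + t • A₂') (i + t • i')}.Finite := by
  classical
  rw [adhmStable_iff_span_wordVector] at h
  let b := Module.Basis.ofSpan h.ge
  have : Fintype _ := FiniteDimensional.fintypeBasisIndex b
  choose x hx using fun k => Module.Basis.ofSpan_subset h.ge (Set.mem_range_self k)
  let M (t : ℂ) := wordVector (A₁ + t • A₁') (A₂ + t • A₂') (i + t • i')
  have hpoly : (fun t => b.det fun k => M t (x k)) ∈ polynomialFunSubring := by
    have key : (fun t => b.det fun k => M t (x k)) =
        ∑ σ : Equiv.Perm _, ((Equiv.Perm.sign σ : ℤ) : ℂ → ℂ) *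
          ∏ k, fun t => b.repr (M t (x k)) (σ k) := by
      funext t
      simp [Module.Basis.det_apply, Matrix.det_apply', Module.Basis.toMatrix_apply,
        Finset.sum_apply, Finset.prod_apply]
    rw [key]
    exact sum_mem fun σ _ => mul_mem (intCast_mem _ _) <| prod_mem fun k _ =>
      repr_wordVector_mem_polynomialFunSubring b A₁ A₁' A₂ A₂' i i' (x k) (σ k)
  have h₀ : (b.det fun k => M 0 (x k)) ≠ 0 := by
    have : (fun k => M 0 (x k)) = b := by
      funext k
      simp [M, hx, b]
    rw [this, b.det_self]
    exact one_ne_zero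
  refine (finite_zeros_of_mem_polynomialFunSubring hpoly h₀).subset fun t ht => ?_
  by_contra hdet
  refine ht ((adhmStable_iff_span_wordVector _ _ _).2 (top_le_iff.1 ?_))
  rw [← ((Module.Basis.is_basis_iff_det b).2 (isUnit_iff_ne_zero.2 hdet)).2]
  refine Submodule.span_mono ?_
  rintro _ ⟨k, rfl⟩
  exact ⟨x k, rfl⟩

end WordVectors

/-- If the evaluated datum is stable at one point of `ℙ¹`, it is stable away
from finitely many points of `ℙ¹`. -/
theorem semistable_finitely_many_unstable_points
    (B₁₁ B₁₂ B₂₁ B₂₂ : V →ₗ[ℂ] V) (i₁ i₂ : W →ₗ[ℂ] V) (j₁ j₂ : V →ₗ[ℂ] W)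
    (h : ∃ p : ℂ × ℂ, p ≠ 0 ∧
      ADHMStable (p.1 • B₁₁ + p.2 • B₂₁) (p.1 • B₁₂ + p.2 • B₂₂)
        (p.1 • i₁ + p.2 • i₂)) :
    {q : Projectivization ℂ (ℂ × ℂ) |
      ¬ ADHMStable (q.rep.1 • B₁₁ + q.rep.2 • B₂₁)
          (q.rep.1 • B₁₂ + q.rep.2 • B₂₂)
          (q.rep.1 • i₁ + q.rep.2 • i₂)}.Finite := by
  obtain ⟨⟨a, b⟩, hp, hst⟩ := h
  obtain ⟨a', b', hD⟩ : ∃ a' b' : ℂ, a * b' - b * a' ≠ 0 := by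
    by_cases ha : a = 0
    · refine ⟨1, 0, ?_⟩
      simpa [ha] using hp
    · exact ⟨0, 1, by simpa using ha⟩
  have hne (t : ℂ) : ((a, b) + t • (a', b') : ℂ × ℂ) ≠ 0 := by
    intro h0
    have h1 : a + t * a' = 0 := by simpa using congrArg Prod.fst h0
    have h2 : b + t * b' = 0 := by simpa using congrArg Prod.snd h0
    exact hD (by linear_combination b' * h1 - a' * h2)
  have hne' : ((a', b') : ℂ × ℂ) ≠ 0 := by
    intro h0
    have h1 : a' = 0 := congrArg Prod.fst h0
    have h2 : b' = 0 := congrArg Prod.snd h0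
    exact hD (by simp [h1, h2])
  refine (((finite_setOf_not_adhmStable_affine _ (a' • B₁₁ + b' • B₂₁) _
    (a' • B₁₂ + b' • B₂₂) _ (a' • i₁ + b' • i₂) hst).image
    fun t => Projectivization.mk ℂ _ (hne t)).insert
      (Projectivization.mk ℂ _ hne')).subset fun q hq => ?_
  obtain ⟨α, hα⟩ : ∃ α, α * (a * b' - b * a') = q.rep.1 * b' - q.rep.2 * a' :=
    ⟨_, div_mul_cancel₀ _ hD⟩
  obtain ⟨β, hβ⟩ : ∃ β, β * (a * b' - b * a') = a * q.rep.2 - b * q.rep.1 :=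
    ⟨_, div_mul_cancel₀ _ hD⟩
  have hq₁ : q.rep.1 = α * a + β * a' :=
    mul_right_cancel₀ hD (by linear_combination -a * hα - a' * hβ)
  have hq₂ : q.rep.2 = α * b + β * b' :=
    mul_right_cancel₀ hD (by linear_combination -b * hα - b' * hβ)
  by_cases h0 : α = 0
  · left
    rw [← q.mk_rep, Projectivization.mk_eq_mk_iff']
    exact ⟨β, Prod.ext (by simp [hq₁, h0]) (by simp [hq₂, h0])⟩
  right
  have hβα : α * (β / α) = β := mul_div_cancel₀ β h0
  have e₁ : q.rep.1 = α * (a + β / α * a') := by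
    rw [hq₁]
    linear_combination -a' * hβα
  have e₂ : q.rep.2 = α * (b + β / α * b') := by
    rw [hq₂]
    linear_combination -b' * hβα
  refine ⟨β / α, fun hs => hq ?_, ?_⟩
  · convert hs.smul h0 using 1 <;> rw [e₁, e₂] <;> module
  · conv_rhs => rw [← q.mk_rep]
    rw [Projectivization.mk_eq_mk_iff']
    refine ⟨α⁻¹, Prod.ext ?_ ?_⟩
    · rw [Prod.smul_fst, e₁]
      simp [h0]
    · rw [Prod.smul_snd, e₂]
      simp [h0]
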